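/- arXiv:1610.07719 — 2 statements merged into one kernel-verified Lean document; each statement's English description precedes it below -/
import Mathlib

section
/- Let t be a positive integer, N = 9t, and let C be a q-ary 3-traceability code of length N with at least three codewords and minimum distance d(C) ≤ 2t. Let C' = {x ∈ C : for every t-subset I ⊆ [N], at least two codewords of C agree with x on all coordinates of I}. Then |C \ C'| ≤ binom(N,t)·q^t, and any two distinct codewords of C' are at Hamming distance strictly greater than d(C). -/
/-- The descendant set of a set `D` of codewords: all words `x` such that in every
coordinate `i`, the symbol `x i` appears as the `i`-th symbol of some codeword of `D`. -/
def descSet {N q : ℕ} (D : Finset (Fin N → Fin q)) : Set (Fin N → Fin q) :=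
  {x | ∀ i : Fin N, ∃ c ∈ D, x i = c i}

/-- `C` is a `t`-traceability (t-TA) code: for every `D ⊆ C` with `|D| ≤ t` and every
`x ∈ desc(D)`, the minimum of `d(x,c)` over `c ∈ D` is strictly smaller than `d(x,y)`
for every `y ∈ C \ D`. -/
def IsTA {N q : ℕ} (t : ℕ) (C : Finset (Fin N → Fin q)) : Prop :=
  ∀ D : Finset (Fin N → Fin q), D ⊆ C → D.card ≤ t →
    ∀ x ∈ descSet D, ∃ c ∈ D, ∀ y ∈ C \ D, hammingDist x c < hammingDist x y

/-- The minimum Hamming distance of a code (junk value `0` if `|C| ≤ 1`). -/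
noncomputable def minDist {N q : ℕ} (C : Finset (Fin N → Fin q)) : ℕ :=
  sInf {d : ℕ | ∃ x ∈ C, ∃ y ∈ C, x ≠ y ∧ hammingDist x y = d}

/-!
If `x` shares each `t`-set of its coordinates with another codeword, then the at most `k * t`
coordinates where `x` differs from a nearby codeword `y` split into `k` blocks of size at most `t`,
each of which is matched by a codeword other than `x`. Together with `y` these are `k + 1` codewords
that have `x` as a descendant, so `x` is framed by a coalition that does not contain it.
For the count, a codeword that owns some `t`-set `I` is determined by `I` and its symbols on `I`.
-/

section Frameproof

open Finset

variable {ι α : Type*}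

/-- A code is `k`-frameproof if no coalition of at most `k` codewords has a codeword outside the
coalition among its descendants. -/
def IsFrameproof (k : ℕ) (C : Finset (ι → α)) : Prop :=
  ∀ D ⊆ C, #D ≤ k → ∀ x ∈ C, (∀ i, ∃ c ∈ D, x i = c i) → x ∈ D

theorem IsTA.isFrameproof {N q k : ℕ} {C : Finset (Fin N → Fin q)} (hC : IsTA k C) :
    IsFrameproof k C := by
  intro D hDC hDk x hxC hxD
  by_contra hx
  obtain ⟨c, -, hc⟩ := hC D hDC hDk x hxD
  simpa using hc x (mem_sdiff.2 ⟨hxC, hx⟩)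

theorem card_le_pow_of_injOn_restrict [Fintype α] {S : Finset (ι → α)} {I : Finset ι}
    (hS : Set.InjOn (I.restrict (π := fun _ ↦ α)) S) : #S ≤ Fintype.card α ^ #I := by
  classical
  simpa using card_le_card_of_injOn _ (fun _ _ ↦ mem_univ _) hS

section Agreement

variable [DecidableEq α]

/-- The codewords of `C` that agree with `x` on `I`; their number is the frequency `F_C(x, I)`. -/
def agreeing (C : Finset (ι → α)) (x : ι → α) (I : Finset ι) : Finset (ι → α) :=
  C.filter fun y ↦ ∀ i ∈ I, y i = x i

theorem mem_agreeing {C : Finset (ι → α)} {x y : ι → α} {I : Finset ι} :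
    y ∈ agreeing C x I ↔ y ∈ C ∧ ∀ i ∈ I, y i = x i :=
  mem_filter

/-- The codewords of `C` that own `I`: no other codeword agrees with them on `I`. -/
def owners (C : Finset (ι → α)) (I : Finset ι) : Finset (ι → α) :=
  C.filter fun x ↦ #(agreeing C x I) ≤ 1

theorem injOn_restrict_owners (C : Finset (ι → α)) (I : Finset ι) :
    Set.InjOn (I.restrict (π := fun _ ↦ α)) (owners C I) := by
  intro x hx y hy hxy
  obtain ⟨hxC, -⟩ := mem_filter.1 hx
  obtain ⟨hyC, hy_own⟩ := mem_filter.1 hy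
  have hx_agree : x ∈ agreeing C y I := mem_agreeing.2 ⟨hxC, fun i hi ↦ congrFun hxy ⟨i, hi⟩⟩
  have hy_agree : y ∈ agreeing C y I := mem_agreeing.2 ⟨hyC, fun _ _ ↦ rfl⟩
  exact card_le_one.1 hy_own x hx_agree y hy_agree

theorem card_owners_le [Fintype α] (C : Finset (ι → α)) (I : Finset ι) :
    #(owners C I) ≤ Fintype.card α ^ #I :=
  card_le_pow_of_injOn_restrict (injOn_restrict_owners C I)

variable [Fintype ι]

/-- The codewords of `C` that own no `t`-set of coordinates, i.e. the set `C'` of `stmt_9`. -/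
def nonOwners (t : ℕ) (C : Finset (ι → α)) : Finset (ι → α) :=
  C.filter fun x ↦ ∀ I : Finset ι, #I = t → 2 ≤ #(agreeing C x I)

theorem sdiff_nonOwners_subset (t : ℕ) (C : Finset (ι → α)) :
    C \ nonOwners t C ⊆ (powersetCard t univ).biUnion (owners C) := by
  intro x hx
  simp only [nonOwners, mem_sdiff, mem_filter, not_and, not_forall] at hx
  obtain ⟨hxC, hx⟩ := hx
  obtain ⟨I, hI, hxI⟩ := hx hxC
  exact mem_biUnion.2 ⟨I, mem_powersetCard_univ.2 hI, mem_filter.2 ⟨hxC, by omega⟩⟩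

theorem card_sdiff_nonOwners_le [Fintype α] (t : ℕ) (C : Finset (ι → α)) :
    #(C \ nonOwners t C) ≤ (Fintype.card ι).choose t * Fintype.card α ^ t := by
  calc #(C \ nonOwners t C)
      ≤ #((powersetCard t univ).biUnion (owners C)) := card_le_card (sdiff_nonOwners_subset t C)
    _ ≤ #(powersetCard t (univ : Finset ι)) * Fintype.card α ^ t :=
        card_biUnion_le_card_mul _ _ _ fun I hI ↦
          mem_powersetCard_univ.1 hI ▸ card_owners_le C I
    _ = (Fintype.card ι).choose t * Fintype.card α ^ t := by rw [card_powersetCard, card_univ]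

variable {k t : ℕ} {C : Finset (ι → α)} {x y : ι → α}

theorem exists_mem_erase_agreeing_of_mem_nonOwners (ht : t ≤ Fintype.card ι)
    (hx : x ∈ nonOwners t C) {S : Finset ι} (hS : #S ≤ t) :
    ∃ z ∈ C.erase x, ∀ i ∈ S, z i = x i := by
  obtain ⟨I, hSI, hI⟩ := exists_superset_card_eq hS ht
  obtain ⟨z, hz, hzx⟩ := exists_mem_ne ((mem_filter.1 hx).2 I hI) x
  obtain ⟨hzC, hzI⟩ := mem_agreeing.1 hz
  exact ⟨z, mem_erase.2 ⟨hzx, hzC⟩, fun i hi ↦ hzI i (hSI hi)⟩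

theorem exists_coalition_of_mem_nonOwners (ht : t ≤ Fintype.card ι)
    (hx : x ∈ nonOwners t C) {S : Finset ι} (hS : #S ≤ k * t) :
    ∃ D ⊆ C.erase x, #D ≤ k ∧ ∀ i ∈ S, ∃ c ∈ D, x i = c i := by
  classical
  induction k generalizing S with
  | zero =>
    obtain rfl : S = ∅ := by simpa using hS
    exact ⟨∅, empty_subset _, le_rfl, by simp⟩
  | succ k ih =>
    obtain ⟨T, hTS, hT⟩ := exists_subset_card_eq (min_le_right t #S)
    have hrest : #(S \ T) ≤ k * t := by
      rw [card_sdiff_of_subset hTS, hT]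
      rw [add_one_mul] at hS
      omega
    obtain ⟨z, hzC, hzT⟩ :=
      exists_mem_erase_agreeing_of_mem_nonOwners ht hx (hT.trans_le (min_le_left _ _))
    obtain ⟨D, hDC, hDk, hD⟩ := ih hrest
    refine ⟨insert z D, insert_subset hzC hDC,
      (card_insert_le z D).trans (Nat.succ_le_succ hDk), fun i hi ↦ ?_⟩
    by_cases hiT : i ∈ T
    · exact ⟨z, mem_insert_self z D, (hzT i hiT).symm⟩
    · obtain ⟨c, hc, hic⟩ := hD i (mem_sdiff.2 ⟨hi, hiT⟩)
      exact ⟨c, mem_insert_of_mem hc, hic⟩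

theorem IsFrameproof.lt_hammingDist (hC : IsFrameproof (k + 1) C) (ht : t ≤ Fintype.card ι)
    (hx : x ∈ nonOwners t C) (hy : y ∈ C) (hxy : x ≠ y) : k * t < hammingDist x y := by
  by_contra! hclose
  obtain ⟨D, hDC, hDk, hD⟩ := exists_coalition_of_mem_nonOwners ht hx hclose
  have hdesc : ∀ i, ∃ c ∈ insert y D, x i = c i := fun i ↦ by
    by_cases hi : x i = y i
    · exact ⟨y, mem_insert_self y D, hi⟩
    · obtain ⟨c, hc, hic⟩ := hD i (mem_filter.2 ⟨mem_univ i, hi⟩)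
      exact ⟨c, mem_insert_of_mem hc, hic⟩
  have hxD : x ∈ insert y D :=
    hC (insert y D) (insert_subset hy (hDC.trans (erase_subset x C)))
      ((card_insert_le y D).trans (Nat.succ_le_succ hDk)) x (mem_filter.1 hx).1 hdesc
  exact notMem_erase x C (hDC (mem_of_mem_insert_of_ne hxD hxy))

theorem stmt_9_general [Fintype α] (hC : IsFrameproof (k + 1) C) (ht : t ≤ Fintype.card ι) :
    #(C \ nonOwners t C) ≤ (Fintype.card ι).choose t * Fintype.card α ^ t ∧
      ∀ x ∈ nonOwners t C, ∀ y ∈ C, x ≠ y → k * t < hammingDist x y :=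
  ⟨card_sdiff_nonOwners_le t C, fun _ hx _ hy hxy ↦ hC.lt_hammingDist ht hx hy hxy⟩

end Agreement

end Frameproof

/-- Let `t ≥ 1`, `N = 9t`, and let `C` be a `q`-ary 3-traceability code of length
`N` with at least three codewords and minimum distance at most `2t`. Let `C'` consist
of those `x ∈ C` such that for every `t`-subset `I` of coordinates at least two
codewords of `C` agree with `x` on all of `I`. Then `|C \ C'| ≤ C(N,t)·q^t`, and any
two distinct codewords of `C'` are at Hamming distance strictly greater than `d(C)`. -/
theorem stmt_9 (t : ℕ) (ht : 1 ≤ t) (N q : ℕ) (hN : N = 9 * t)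
    (C : Finset (Fin N → Fin q)) (hC : IsTA 3 C) (h3 : 3 ≤ C.card)
    (hd : minDist C ≤ 2 * t)
    (C' : Finset (Fin N → Fin q))
    (hC' : C' = C.filter fun x => ∀ I : Finset (Fin N), I.card = t →
      2 ≤ (C.filter fun y => ∀ i ∈ I, y i = x i).card) :
    (C \ C').card ≤ N.choose t * q ^ t ∧
      ∀ x ∈ C', ∀ y ∈ C', x ≠ y → minDist C < hammingDist x y := by
  obtain rfl : C' = nonOwners t C := by
    -- The two sides differ only in their decidability instances.
    unfold nonOwners agreeing
    convert hC'
  obtain ⟨hcard, hdist⟩ := stmt_9_general (t := t) (hC.isFrameproof (k := 3)) (by simp; omega)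
  exact ⟨by simpa only [Fintype.card_fin] using hcard, fun x hx y hy hxy ↦
    hd.trans_lt (hdist x hx y (Finset.mem_filter.1 hy).1 hxy)⟩
end

section
/- Let t ≥ 2 and set v = ⌊(t/2+1)²⌋. Then every q-ary t-parent-identifying code of length N has at most (v−1)·q^⌈N/(v−1)⌉ codewords; that is, M_IPP(N,q,t) ≤ (v−1)·q^⌈N/(v−1)⌉. -/
/-- `C` is a `t`-parent-identifying (t-IPP) code: for every word `x`, if the collection
`P_t(x)` of parent sets `D ⊆ C`, `|D| ≤ t`, `x ∈ desc(D)` is nonempty, then the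
intersection of all members of `P_t(x)` is nonempty. -/
def IsIPP {N q : ℕ} (t : ℕ) (C : Finset (Fin N → Fin q)) : Prop :=
  ∀ x : Fin N → Fin q,
    (∃ D : Finset (Fin N → Fin q), D ⊆ C ∧ D.card ≤ t ∧ x ∈ descSet D) →
    ∃ c : Fin N → Fin q,
      ∀ D : Finset (Fin N → Fin q), D ⊆ C → D.card ≤ t → x ∈ descSet D → c ∈ D

/-!
Cut the `N` coordinates into `n = v - 1` blocks of length at most `⌈N / n⌉`. If `C` has more words
than there are patterns on the blocks, repeatedly deleting a word that owns some block pattern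
leaves a nonempty `C' ⊆ C` in which each word has, on each block, a twin: another word of `C'` with
the same pattern there. Starting from one word of `C'` and adding a twin on a block where the
current words are still pairwise distinct, at most `k = ⌊t / 2⌋ + 1` words `D` are collected, such
that the blocks separating the words of `D` are few enough to be distributed over `D` with at most
`s = t + 1 - k` blocks per word. Compose a word `x` blockwise from words of `D`, following this
distribution on the separating blocks and using a word with a twin in `D` on the others. Any
`c ∈ D` can then be removed from `D` at the cost of at most `s` twins from `C'`, so no word lies in
all parent sets of `x` of size at most `t`.
-/

open Finset

lemma exists_forall_card_fiber_le {ι α : Type*} [Fintype ι] [Fintype α] [DecidableEq α] {s : ℕ}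
    (h : Fintype.card ι ≤ Fintype.card α * s) :
    ∃ f : ι → α, ∀ a, #{i | f i = a} ≤ s := by
  obtain ⟨e⟩ : Nonempty (ι ↪ α × Fin s) :=
    Function.Embedding.nonempty_of_card_le (by simpa using h)
  refine ⟨fun i ↦ (e i).1, fun a ↦ ?_⟩
  have hinj : Set.InjOn (fun i ↦ (e i).2) ({i | (e i).1 = a} : Finset ι) := by
    intro i hi i' hi' heq
    simp only [coe_filter, mem_univ, true_and, Set.mem_ofPred_eq] at hi hi'
    exact e.injective (Prod.ext (hi.trans hi'.symm) heq)
  simpa using card_le_card_of_injOn _ (fun _ _ ↦ mem_univ _) hinj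

section Twins

variable {ι α : Type*} {β : ι → Type*} {p : ∀ j, α → β j} {C D : Finset α}

/-- Every element of `C` agrees with some other element of `C` in each coordinate `p j`. For codes,
`p j` is the restriction of words to the `j`-th block of positions. -/
def Twinned (p : ∀ j, α → β j) (C : Finset α) : Prop :=
  ∀ c ∈ C, ∀ j, ∃ c' ∈ C, c' ≠ c ∧ p j c' = p j c

/-- The indices `j` for which `p j` separates the elements of `D`; on the remaining ones two
elements of `D` are twins. -/
noncomputable def separatingIndices [Fintype ι] (p : ∀ j, α → β j) (D : Finset α) : Finset ι :=
  open scoped Classical in {j | Set.InjOn (p j) D}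

lemma mem_separatingIndices [Fintype ι] {j : ι} :
    j ∈ separatingIndices p D ↔ Set.InjOn (p j) D := by
  simp [separatingIndices]

lemma separatingIndices_anti [Fintype ι] {D' : Finset α} (h : D ⊆ D') :
    separatingIndices p D' ⊆ separatingIndices p D := fun _ hj ↦
  mem_separatingIndices.2 ((mem_separatingIndices.1 hj).mono (coe_subset.2 h))

lemma sum_card_image_erase_lt [Fintype ι] [DecidableEq α] [∀ j, DecidableEq (β j)] {c : α} {j : ι}
    (hc : c ∈ C) (hown : ∀ c' ∈ C, c' ≠ c → p j c' ≠ p j c) :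
    ∑ i, #((C.erase c).image (p i)) < ∑ i, #(C.image (p i)) := by
  have hsub (i : ι) : (C.erase c).image (p i) ⊆ C.image (p i) :=
    image_subset_image (erase_subset c C)
  have hnotMem : p j c ∉ (C.erase c).image (p j) := by
    simp only [mem_image, mem_erase, not_exists, not_and]
    exact fun c' hc' ↦ hown c' hc'.2 hc'.1
  refine sum_lt_sum (fun i _ ↦ card_le_card (hsub i)) ⟨j, mem_univ j, card_lt_card ?_⟩
  exact (ssubset_iff_of_subset (hsub j)).2 ⟨p j c, mem_image_of_mem _ hc, hnotMem⟩

lemma exists_twinned_subset [Fintype ι] [∀ j, DecidableEq (β j)]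
    (hC : ∑ j, #(C.image (p j)) < #C) : ∃ C' ⊆ C, C'.Nonempty ∧ Twinned p C' := by
  classical
  induction C using Finset.strongInduction with
  | H C ih =>
    by_cases htwin : Twinned p C
    · exact ⟨C, Subset.rfl, card_pos.1 (by omega), htwin⟩
    · simp only [Twinned, not_forall, not_exists, not_and] at htwin
      obtain ⟨c, hc, j, hown⟩ := htwin
      have hsum := sum_card_image_erase_lt hc hown
      have hcard := card_erase_add_one hc
      obtain ⟨C', hC', h⟩ := ih (C.erase c) (erase_ssubset hc) (by omega)
      exact ⟨C', hC'.trans (erase_subset c C), h⟩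

lemma Twinned.exists_card_separatingIndices_insert_lt [Fintype ι] [DecidableEq α]
    (hC : Twinned p C) (hDC : D ⊆ C) (hD : D.Nonempty) (hsep : (separatingIndices p D).Nonempty) :
    ∃ c ∈ C, c ∉ D ∧ #(separatingIndices p (insert c D)) < #(separatingIndices p D) := by
  obtain ⟨j, hj⟩ := hsep
  obtain ⟨d, hd⟩ := hD
  obtain ⟨c, hc, hcd, hpc⟩ := hC d (hDC hd) j
  have hcD : c ∉ D := fun hcD ↦ hcd (mem_separatingIndices.1 hj hcD hd hpc)
  have hj' : j ∉ separatingIndices p (insert c D) := fun hj' ↦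
    hcd (mem_separatingIndices.1 hj' (mem_insert_self c D) (mem_insert_of_mem hd) hpc)
  refine ⟨c, hc, hcD, card_lt_card ?_⟩
  exact (ssubset_iff_of_subset (separatingIndices_anti (subset_insert c D))).2 ⟨j, hj, hj'⟩

lemma Twinned.exists_subset_separatingIndices_eq_empty_or [Fintype ι] (hC : Twinned p C)
    (hne : C.Nonempty) (m : ℕ) :
    ∃ D ⊆ C, D.Nonempty ∧ #D ≤ m + 1 ∧ (separatingIndices p D = ∅ ∨
      #D = m + 1 ∧ #(separatingIndices p D) + m ≤ Fintype.card ι) := by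
  classical
  induction m with
  | zero =>
    obtain ⟨c, hc⟩ := hne
    exact ⟨{c}, singleton_subset_iff.2 hc, singleton_nonempty c, le_rfl,
      .inr ⟨card_singleton c, card_le_univ _⟩⟩
  | succ m ih =>
    obtain ⟨D, hDC, hD, hcard, hsep⟩ := ih
    obtain hempty | hsep' := (separatingIndices p D).eq_empty_or_nonempty
    · exact ⟨D, hDC, hD, by omega, .inl hempty⟩
    · obtain ⟨hcardD, hcardSep⟩ := hsep.resolve_left hsep'.ne_empty
      obtain ⟨c, hc, hcD, hlt⟩ := hC.exists_card_separatingIndices_insert_lt hDC hD hsep'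
      have hcardInsert := card_insert_of_notMem hcD
      exact ⟨insert c D, insert_subset hc hDC, insert_nonempty c D, by omega,
        .inr ⟨by omega, by omega⟩⟩

lemma Twinned.exists_subset_card_separatingIndices_le [Fintype ι] {k s : ℕ} (hC : Twinned p C)
    (hne : C.Nonempty) (hι : Fintype.card ι < k * (s + 1)) :
    ∃ D ⊆ C, #D ≤ k ∧ #(separatingIndices p D) ≤ #D * s := by
  obtain ⟨m, rfl⟩ : ∃ m, k = m + 1 :=
    Nat.exists_eq_succ_of_ne_zero (Nat.pos_of_mul_pos_right (Nat.zero_lt_of_lt hι)).ne'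
  obtain ⟨D, hDC, -, hcard, hempty | ⟨hcardD, hcardSep⟩⟩ :=
    hC.exists_subset_separatingIndices_eq_empty_or hne m
  · exact ⟨D, hDC, hcard, by simp [hempty]⟩
  · refine ⟨D, hDC, hcard, ?_⟩
    rw [hcardD]
    linarith

lemma exists_selection_forall_exists_twin [Fintype ι] {s : ℕ}
    (hsep : #(separatingIndices p D) ≤ #D * s) :
    ∃ w : ι → α, (∀ j, w j ∈ D) ∧ ∀ c, ∃ B : Finset ι, #B ≤ s ∧
      ∀ j ∉ B, w j = c → ∃ c' ∈ D, c' ≠ c ∧ p j c' = p j c := by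
  classical
  obtain ⟨f, hf⟩ : ∃ f : separatingIndices p D → D, ∀ d, #{j | f j = d} ≤ s :=
    exists_forall_card_fiber_le (by simpa using hsep)
  have hselect (j : ι) : ∃ d ∈ D, (∀ hj : j ∈ separatingIndices p D, d = f ⟨j, hj⟩) ∧
      (j ∉ separatingIndices p D → ∃ c' ∈ D, c' ≠ d ∧ p j c' = p j d) := by
    by_cases hj : j ∈ separatingIndices p D
    · exact ⟨f ⟨j, hj⟩, (f ⟨j, hj⟩).2, fun _ ↦ rfl, fun h ↦ absurd hj h⟩
    · have hninj := mem_separatingIndices.not.1 hj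
      simp only [Set.InjOn, not_forall, mem_coe] at hninj
      obtain ⟨c', hc', d, hd, hp, hne⟩ := hninj
      exact ⟨d, hd, fun h ↦ absurd h hj, fun _ ↦ ⟨c', hc', hne, hp⟩⟩
  choose w hwD hwf hwtwin using hselect
  refine ⟨w, hwD, fun c ↦ ?_⟩
  by_cases hc : c ∈ D
  · refine ⟨({j | f j = ⟨c, hc⟩} : Finset _).map (.subtype _), by simpa using hf ⟨c, hc⟩, ?_⟩
    rintro j hjB rfl
    refine hwtwin j fun hj ↦ hjB ?_
    simpa [hj] using Subtype.ext (hwf j hj).symm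
  · exact ⟨∅, by simp, fun j _ hj ↦ absurd (hj ▸ hwD j) hc⟩

lemma Twinned.exists_replacement {c : α} {w : ι → α} {B : Finset ι} (hC : Twinned p C)
    (hDC : D ⊆ C) (hc : c ∈ D) (hwD : ∀ j, w j ∈ D)
    (htwin : ∀ j ∉ B, w j = c → ∃ c' ∈ D, c' ≠ c ∧ p j c' = p j c) :
    ∃ D' ⊆ C, #D' + 1 ≤ #D + #B ∧ c ∉ D' ∧ ∀ j, ∃ d ∈ D', p j d = p j (w j) := by
  classical
  choose r hrC hrne hr using hC c (hDC hc)
  refine ⟨D.erase c ∪ B.image r, ?_, ?_, ?_, fun j ↦ ?_⟩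
  · exact union_subset ((erase_subset c D).trans hDC) (image_subset_iff.2 fun j _ ↦ hrC j)
  · have hunion := card_union_le (D.erase c) (B.image r)
    have himage : #(B.image r) ≤ #B := card_image_le
    have herase := card_erase_add_one hc
    omega
  · simp [hrne]
  · by_cases hwc : w j = c
    · by_cases hj : j ∈ B
      · exact ⟨r j, mem_union_right _ (mem_image_of_mem r hj), by rw [hwc, hr]⟩
      · obtain ⟨c', hc', hne, hp⟩ := htwin j hj hwc
        exact ⟨c', mem_union_left _ (mem_erase.2 ⟨hne, hc'⟩), by rw [hwc, hp]⟩
    · exact ⟨w j, mem_union_left _ (mem_erase.2 ⟨hwc, hwD j⟩), rfl⟩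

lemma Twinned.exists_selection_forall_exists_avoiding [Fintype ι] {k s t : ℕ} (hC : Twinned p C)
    (hne : C.Nonempty) (hs : 0 < s) (hks : k + s ≤ t + 1) (hι : Fintype.card ι < k * (s + 1)) :
    ∃ w : ι → α, ∀ c, ∃ D ⊆ C, #D ≤ t ∧ c ∉ D ∧ ∀ j, ∃ d ∈ D, p j d = p j (w j) := by
  obtain ⟨D, hDC, hcard, hsep⟩ := hC.exists_subset_card_separatingIndices_le hne hι
  obtain ⟨w, hwD, hw⟩ := exists_selection_forall_exists_twin hsep
  refine ⟨w, fun c ↦ ?_⟩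
  by_cases hc : c ∈ D
  · obtain ⟨B, hB, htwin⟩ := hw c
    obtain ⟨D', hD'C, hcard', hcD', hcover⟩ := hC.exists_replacement hDC hc hwD htwin
    exact ⟨D', hD'C, by omega, hcD', hcover⟩
  · exact ⟨D, hDC, by omega, hc, fun j ↦ ⟨w j, hwD j, rfl⟩⟩

end Twins

section Codes

/-- The restriction of the word `c` to the `j`-th block of the partition of its positions into the
fibers of `π`. -/
def blockPattern {κ ι A : Type*} (π : κ → ι) (j : ι) (c : κ → A) : {i // π i = j} → A :=
  fun i ↦ c i

variable {N q t k s : ℕ} {C : Finset (Fin N → Fin q)}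

lemma IsIPP.card_le_sum_card_image_blockPattern {ι : Type*} [Fintype ι] [DecidableEq ι]
    (hC : IsIPP t C) (hs : 0 < s) (hks : k + s ≤ t + 1) (hι : Fintype.card ι < k * (s + 1))
    (π : Fin N → ι) : #C ≤ ∑ j, #(C.image (blockPattern π j)) := by
  by_contra! hlt
  obtain ⟨C', hC'C, hne, htwin⟩ := exists_twinned_subset hlt
  obtain ⟨w, hw⟩ := htwin.exists_selection_forall_exists_avoiding hne hs hks hι
  have hparent (c : Fin N → Fin q) :
      ∃ D ⊆ C, #D ≤ t ∧ c ∉ D ∧ (fun i ↦ w (π i) i) ∈ descSet D := by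
    obtain ⟨D, hDC', hcard, hcD, hcover⟩ := hw c
    refine ⟨D, hDC'.trans hC'C, hcard, hcD, fun i ↦ ?_⟩
    obtain ⟨d, hd, hdw⟩ := hcover (π i)
    exact ⟨d, hd, (congrFun hdw ⟨i, rfl⟩).symm⟩
  obtain ⟨c₀, -⟩ := hne
  obtain ⟨D₀, hD₀C, hcard₀, -, hdesc₀⟩ := hparent c₀
  obtain ⟨c, hc⟩ := hC _ ⟨D₀, hD₀C, hcard₀, hdesc₀⟩
  obtain ⟨D, hDC, hcard, hcD, hdesc⟩ := hparent c
  exact hcD (hc D hDC hcard hdesc)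

lemma IsIPP.card_le_mul_pow {n L : ℕ} (hC : IsIPP t C) (hs : 0 < s) (hks : k + s ≤ t + 1)
    (hn : n < k * (s + 1)) (hNL : N ≤ n * L) (hq : 0 < q) : #C ≤ n * q ^ L := by
  obtain ⟨π, hπ⟩ : ∃ π : Fin N → Fin n, ∀ j, #{i | π i = j} ≤ L :=
    exists_forall_card_fiber_le (by simpa using hNL)
  have hblock (j : Fin n) : #(C.image (blockPattern π j)) ≤ q ^ L :=
    calc
      _ ≤ q ^ #{i | π i = j} := (card_le_univ _).trans_eq (by simp [Fintype.card_subtype])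
      _ ≤ q ^ L := Nat.pow_le_pow_right hq (hπ j)
  calc
    #C ≤ ∑ j, #(C.image (blockPattern π j)) :=
      hC.card_le_sum_card_image_blockPattern hs hks (by simpa using hn) π
    _ ≤ ∑ _j : Fin n, q ^ L := sum_le_sum fun j _ ↦ hblock j
    _ = n * q ^ L := by simp

end Codes

lemma floor_half_add_one_sq (t : ℕ) :
    ⌊((t : ℝ) / 2 + 1) ^ 2⌋₊ = (t / 2 + 1) * ((t + 1) / 2 + 1) := by
  rw [Nat.floor_eq_iff (by positivity)]
  obtain ⟨m, rfl | rfl⟩ := Nat.even_or_odd' t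
  · rw [show 2 * m / 2 = m by omega, show (2 * m + 1) / 2 = m by omega]
    push_cast
    constructor <;> linarith
  · rw [show (2 * m + 1) / 2 = m by omega, show (2 * m + 1 + 1) / 2 = m + 1 by omega]
    push_cast
    constructor <;> linarith

/-- Let `t ≥ 2` and `v = ⌊(t/2+1)²⌋`. Then every `q`-ary `t`-IPP code of length
`N` has at most `(v−1)·q^⌈N/(v−1)⌉` codewords. -/
theorem stmt_15 (N q t v : ℕ) (ht : 2 ≤ t)
    (hv : v = ⌊((t : ℝ) / 2 + 1) ^ 2⌋₊)
    (C : Finset (Fin N → Fin q)) (hC : IsIPP t C) :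
    C.card ≤ (v - 1) * q ^ (N ⌈/⌉ (v - 1)) := by
  have hv' : v = (t / 2 + 1) * ((t + 1) / 2 + 1) := hv.trans (floor_half_add_one_sq t)
  have hv2 : 2 ≤ v := hv' ▸ le_mul_of_le_of_one_le (by omega) (by omega)
  obtain rfl | hq := q.eq_zero_or_pos
  · obtain rfl | hN := N.eq_zero_or_pos
    · exact (card_le_univ C).trans (by simpa using (show 1 ≤ v - 1 by omega))
    · have : NeZero N := ⟨hN.ne'⟩
      simp [Finset.eq_empty_of_isEmpty C]
  · have hN : N ≤ (v - 1) * (N ⌈/⌉ (v - 1)) := le_smul_ceilDiv (show 0 < v - 1 by omega)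
    exact hC.card_le_mul_pow (k := t / 2 + 1) (s := (t + 1) / 2) (by omega) (by omega)
      (by omega) hN hq
end
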